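/- Fix n ∈ ℕ with n ≥ 1 and c ∈ ℝ. For every ρ ∈ (0,1), the function ρ ↦ H_n(ρ,c) is differentiable at ρ with derivative H_n'(ρ,c) = ∫_ℝ n·Φ(d(ρ,c,z))^{n−1}·φ(d(ρ,c,z))·G(ρ,c,z)·φ(z) dz, where G(ρ,c,z) = (c + z/√ρ)/(2(1−ρ)^{3/2}). -/

import Mathlib

open MeasureTheory Filter

/-- The standard normal density. -/
noncomputable def phi (x : ℝ) : ℝ := (Real.sqrt (2 * Real.pi))⁻¹ * Real.exp (-x ^ 2 / 2)

/-- The standard normal cumulative distribution function. -/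
noncomputable def Phi (x : ℝ) : ℝ := ∫ t in Set.Iic x, phi t

/-- d(ρ,c,z) = (c + √ρ·z)/√(1−ρ). -/
noncomputable def dd (ρ c z : ℝ) : ℝ := (c + Real.sqrt ρ * z) / Real.sqrt (1 - ρ)

/-- G(ρ,c,z) = (c + z/√ρ)/(2(1−ρ)^{3/2}). -/
noncomputable def G (ρ c z : ℝ) : ℝ :=
  (c + z / Real.sqrt ρ) / (2 * (1 - ρ) ^ ((3 : ℝ) / 2))

/-- H_n(ρ,c) = ∫ Φ(d(ρ,c,z))^n φ(z) dz. -/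
noncomputable def Hn (n : ℕ) (ρ c : ℝ) : ℝ := ∫ z : ℝ, (Phi (dd ρ c z)) ^ n * phi z

/-!
`d(ρ,c,z)` is affine in `z`, with coefficients `a = c/√(1−ρ)` and `b = √ρ/√(1−ρ)`, and
`G(ρ,c,z) = ∂a/∂ρ + ∂b/∂ρ · z`. Hence `H_n` is the expectation of the Lipschitz function `Φⁿ` at an
affine image of a standard normal variable. For a Lipschitz `F` and an integrable `Y`, the
difference quotients of `F (a + b Y)` at a point where `a` and `b` are differentiable are dominated
by a multiple of `A + B |Y|`, where `A` and `B` bound the difference quotients of `a` and `b`, so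
one may differentiate under the expectation.
-/

open ProbabilityTheory Topology
open scoped NNReal

section DifferentiationUnderTheIntegral

variable {Ω E : Type*} [MeasurableSpace Ω] {μ : Measure Ω} [NormedAddCommGroup E]

lemma hasDerivAt_integral_of_norm_sub_le {𝕜 : Type*} [RCLike 𝕜] [NormedSpace ℝ E]
    [NormedSpace 𝕜 E] {F : 𝕜 → Ω → E} {F' : Ω → E} {bound : Ω → ℝ} {t : 𝕜}
    {s : Set 𝕜} (hs : s ∈ 𝓝 t) (hF_meas : ∀ r ∈ s, AEStronglyMeasurable (F r) μ)
    (hF_int : Integrable (F t) μ) (hF'_meas : AEStronglyMeasurable F' μ)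
    (h_le : ∀ᵐ ω ∂μ, ∀ r ∈ s, ‖F r ω - F t ω‖ ≤ bound ω * ‖r - t‖)
    (h_bound : Integrable bound μ) (h_deriv : ∀ᵐ ω ∂μ, HasDerivAt (F · ω) (F' ω) t) :
    HasDerivAt (fun r => ∫ ω, F r ω ∂μ) (∫ ω, F' ω ∂μ) t := by
  let L : E ≃L[𝕜] (𝕜 →L[𝕜] E) := ContinuousLinearMap.toSpanSingletonCLE
  obtain ⟨hint, hderiv⟩ := hasFDerivAt_integral_of_dominated_loc_of_lip' hs hF_meas hF_int
    (L.continuous.comp_aestronglyMeasurable hF'_meas) h_le h_bound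
    (h_deriv.mono fun ω hω => hω.hasFDerivAt)
  refine hderiv.hasDerivAt.congr_deriv ?_
  rw [ContinuousLinearMap.integral_apply hint]
  simp [L]

variable {K : ℝ≥0}

lemma integrable_comp_of_lipschitzWith [IsFiniteMeasure μ] {V : Type*} [NormedAddCommGroup V]
    {F : V → E} {X : Ω → V} (hF : LipschitzWith K F) (hX : Integrable X μ) :
    Integrable (fun ω => F (X ω)) μ := by
  refine ((hX.norm.const_mul (K : ℝ)).add (integrable_const ‖F 0‖)).mono'
    (hF.continuous.comp_aestronglyMeasurable hX.aestronglyMeasurable)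
    (Eventually.of_forall fun ω => ?_)
  calc ‖F (X ω)‖ ≤ ‖F (X ω) - F 0‖ + ‖F 0‖ := norm_le_norm_sub_add _ _
    _ ≤ K * ‖X ω‖ + ‖F 0‖ := by simpa using hF.norm_sub_le (X ω) 0

lemma norm_comp_affine_sub_le {F : ℝ → E} (hF : LipschitzWith K F) {a₀ a₁ b₀ b₁ A B : ℝ}
    (ha : ‖a₁ - a₀‖ ≤ A) (hb : ‖b₁ - b₀‖ ≤ B) (y : ℝ) :
    ‖F (a₁ + b₁ * y) - F (a₀ + b₀ * y)‖ ≤ K * (A + B * ‖y‖) :=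
  calc ‖F (a₁ + b₁ * y) - F (a₀ + b₀ * y)‖
      ≤ K * ‖(a₁ + b₁ * y) - (a₀ + b₀ * y)‖ := hF.norm_sub_le _ _
    _ = K * ‖(a₁ - a₀) + (b₁ - b₀) * y‖ := by ring_nf
    _ ≤ K * (A + B * ‖y‖) := by
        gcongr
        exact norm_add_le_of_le ha (norm_mul_le_of_le hb le_rfl)

lemma hasDerivAt_integral_comp_affine [IsFiniteMeasure μ] [NormedSpace ℝ E] [CompleteSpace E]
    {F F' : ℝ → E} {Y : Ω → ℝ} {a b : ℝ → ℝ} {a' b' t : ℝ}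
    (hF : LipschitzWith K F) (hF' : ∀ x, HasDerivAt F (F' x) x) (hY : Integrable Y μ)
    (ha : HasDerivAt a a' t) (hb : HasDerivAt b b' t) :
    HasDerivAt (fun s => ∫ ω, F (a s + b s * Y ω) ∂μ)
      (∫ ω, (a' + b' * Y ω) • F' (a t + b t * Y ω) ∂μ) t := by
  have hX : ∀ s, Integrable (fun ω => a s + b s * Y ω) μ := fun s =>
    (integrable_const _).add (hY.const_mul _)
  have hFX : ∀ s, Integrable (fun ω => F (a s + b s * Y ω)) μ := fun s =>
    integrable_comp_of_lipschitzWith hF (hX s)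
  have hF'_meas : StronglyMeasurable F' :=
    (funext fun x => (hF' x).deriv : deriv F = F') ▸ stronglyMeasurable_deriv F
  obtain ⟨A, hA⟩ := ha.isBigO_sub.bound
  obtain ⟨B, hB⟩ := hb.isBigO_sub.bound
  refine hasDerivAt_integral_of_norm_sub_le (bound := fun ω => K * (A + B * ‖Y ω‖)) (hA.and hB)
    (fun s _ => (hFX s).aestronglyMeasurable) (hFX t) ?_
    (Eventually.of_forall fun ω s hs => ?_)
    (((integrable_const A).add (hY.norm.const_mul B)).const_mul (K : ℝ))
    (Eventually.of_forall fun ω => (hF' _).scomp t (ha.add (hb.mul_const (Y ω))))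
  · exact (((hY.const_mul b').aestronglyMeasurable.const_add a').smul
      (hF'_meas.aestronglyMeasurable.comp_aemeasurable (hX t).aemeasurable))
  · calc ‖F (a s + b s * Y ω) - F (a t + b t * Y ω)‖
        ≤ K * (A * ‖s - t‖ + B * ‖s - t‖ * ‖Y ω‖) := norm_comp_affine_sub_le hF hs.1 hs.2 _
      _ = K * (A + B * ‖Y ω‖) * ‖s - t‖ := by ring

end DifferentiationUnderTheIntegral

lemma hasDerivAt_integral_Iic {E : Type*} [NormedAddCommGroup E] [NormedSpace ℝ E]
    [CompleteSpace E] {f : ℝ → E} {x : ℝ} (hf : ∀ y, IntegrableOn f (Set.Iic y))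
    (hx : ContinuousAt f x) : HasDerivAt (fun y => ∫ t in Set.Iic y, f t) (f x) x := by
  have hsplit : (fun y => ∫ t in Set.Iic y, f t) =
      fun y => (∫ t in Set.Iic x, f t) + ∫ t in x..y, f t := by
    funext y
    rw [← intervalIntegral.integral_Iic_sub_Iic (hf x) (hf y), add_sub_cancel]
  have hmeas : StronglyMeasurableAtFilter f (𝓝 x) :=
    ⟨Set.Iic (x + 1), Iic_mem_nhds (lt_add_one x), (hf (x + 1)).aestronglyMeasurable⟩
  rw [hsplit]
  exact (intervalIntegral.integral_hasDerivAt_right .refl hmeas hx).const_add _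

section StandardNormal

lemma phi_eq_gaussianPDFReal : phi = gaussianPDFReal 0 1 := by
  funext x
  simp [phi, gaussianPDFReal]

lemma Phi_eq_cdf_gaussianReal : Phi = cdf (gaussianReal 0 1) := by
  funext x
  rw [cdf_eq_real, measureReal_def, gaussianReal_apply_eq_integral 0 one_ne_zero,
    ← phi_eq_gaussianPDFReal, ENNReal.toReal_ofReal, Phi]
  exact integral_nonneg fun t => phi_eq_gaussianPDFReal ▸ gaussianPDFReal_nonneg 0 1 t

lemma integral_mul_phi (f : ℝ → ℝ) : ∫ z, f z * phi z = ∫ z, f z ∂gaussianReal 0 1 := by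
  simp_rw [integral_gaussianReal_eq_integral_smul one_ne_zero, phi_eq_gaussianPDFReal,
    smul_eq_mul, mul_comm]

lemma abs_phi_le_one (x : ℝ) : |phi x| ≤ 1 := by
  have hsqrt : 1 ≤ √(2 * Real.pi) := Real.one_le_sqrt.2 (by linarith [Real.pi_gt_three])
  have hexp : Real.exp (-x ^ 2 / 2) ≤ 1 := Real.exp_le_one_iff.2 (by linarith [sq_nonneg x])
  rw [phi, abs_of_nonneg (by positivity)]
  exact mul_le_one₀ (inv_le_one_of_one_le₀ hsqrt) (Real.exp_pos _).le hexp

lemma abs_Phi_le_one (x : ℝ) : |Phi x| ≤ 1 := by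
  rw [Phi_eq_cdf_gaussianReal, abs_of_nonneg (cdf_nonneg _ x)]
  exact cdf_le_one _ x

lemma hasDerivAt_Phi (x : ℝ) : HasDerivAt Phi (phi x) x := by
  have hcont : Continuous phi := by unfold phi; fun_prop
  have hint : Integrable phi := phi_eq_gaussianPDFReal ▸ integrable_gaussianPDFReal 0 1
  exact hasDerivAt_integral_Iic (fun _ => hint.integrableOn) hcont.continuousAt

lemma hasDerivAt_Phi_pow (n : ℕ) (x : ℝ) :
    HasDerivAt (fun y => Phi y ^ n) (n * Phi x ^ (n - 1) * phi x) x :=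
  (hasDerivAt_Phi x).pow n

lemma lipschitzWith_Phi_pow (n : ℕ) : LipschitzWith n fun x => Phi x ^ n := by
  refine lipschitzWith_of_nnnorm_deriv_le
    (fun x => (hasDerivAt_Phi_pow n x).differentiableAt) fun x => ?_
  rw [(hasDerivAt_Phi_pow n x).deriv, ← NNReal.coe_le_coe, coe_nnnorm, Real.norm_eq_abs,
    NNReal.coe_natCast, mul_assoc, abs_mul, Nat.abs_cast, abs_mul, abs_pow]
  exact mul_le_of_le_one_right n.cast_nonneg <|
    mul_le_one₀ (pow_le_one₀ (abs_nonneg _) (abs_Phi_le_one x)) (abs_nonneg _) (abs_phi_le_one _)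

end StandardNormal

section CorrelationParameter

lemma hasDerivAt_inv_sqrt_one_sub {ρ : ℝ} (hρ : ρ < 1) :
    HasDerivAt (fun r => (√(1 - r))⁻¹) (2 * (1 - ρ) ^ ((3 : ℝ) / 2))⁻¹ ρ := by
  have hpos : 0 < 1 - ρ := sub_pos.2 hρ
  have hsqrt : 0 < √(1 - ρ) := Real.sqrt_pos.2 hpos
  refine ((((hasDerivAt_id ρ).const_sub 1).sqrt hpos.ne').inv hsqrt.ne').congr_deriv ?_
  rw [Real.rpow_div_two_eq_sqrt 3 hpos.le, Real.rpow_ofNat]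
  simp only [id]
  field_simp

lemma hasDerivAt_sqrt_mul_inv_sqrt_one_sub {ρ : ℝ} (hρ₀ : 0 < ρ) (hρ₁ : ρ < 1) :
    HasDerivAt (fun r => √r * (√(1 - r))⁻¹) ((√ρ)⁻¹ * (2 * (1 - ρ) ^ ((3 : ℝ) / 2))⁻¹) ρ := by
  have hpos : 0 < 1 - ρ := sub_pos.2 hρ₁
  refine ((Real.hasDerivAt_sqrt hρ₀.ne').mul (hasDerivAt_inv_sqrt_one_sub hρ₁)).congr_deriv ?_
  rw [Real.rpow_div_two_eq_sqrt 3 hpos.le, Real.rpow_ofNat]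
  field_simp
  rw [Real.sq_sqrt hρ₀.le, Real.sq_sqrt hpos.le]
  ring

lemma dd_eq_add_mul (ρ c z : ℝ) :
    dd ρ c z = c * (√(1 - ρ))⁻¹ + √ρ * (√(1 - ρ))⁻¹ * z := by
  rw [dd]
  ring

lemma G_eq_add_mul (ρ c z : ℝ) :
    G ρ c z = c * (2 * (1 - ρ) ^ ((3 : ℝ) / 2))⁻¹ +
      (√ρ)⁻¹ * (2 * (1 - ρ) ^ ((3 : ℝ) / 2))⁻¹ * z := by
  rw [G]
  ring

lemma hasDerivAt_integral_comp_dd {E : Type*} [NormedAddCommGroup E] [NormedSpace ℝ E]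
    [CompleteSpace E] {μ : Measure ℝ} [IsFiniteMeasure μ] (hμ : Integrable id μ)
    {F F' : ℝ → E} {K : ℝ≥0} (hF : LipschitzWith K F) (hF' : ∀ x, HasDerivAt F (F' x) x)
    (c : ℝ) {ρ : ℝ} (hρ₀ : 0 < ρ) (hρ₁ : ρ < 1) :
    HasDerivAt (fun r => ∫ z, F (dd r c z) ∂μ) (∫ z, G ρ c z • F' (dd ρ c z) ∂μ) ρ := by
  simp_rw [dd_eq_add_mul, G_eq_add_mul]
  exact hasDerivAt_integral_comp_affine hF hF' hμ
    ((hasDerivAt_inv_sqrt_one_sub hρ₁).const_mul c)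
    (hasDerivAt_sqrt_mul_inv_sqrt_one_sub hρ₀ hρ₁)

end CorrelationParameter

theorem hasDerivAt_Hn (n : ℕ) (hn : 1 ≤ n) (c : ℝ) (ρ : ℝ) (hρ : ρ ∈ Set.Ioo (0:ℝ) 1) :
    HasDerivAt (fun r => Hn n r c)
      (∫ z : ℝ, (n : ℝ) * (Phi (dd ρ c z)) ^ (n - 1) * phi (dd ρ c z) * G ρ c z * phi z) ρ := by
  have hid : Integrable id (gaussianReal 0 1) :=
    memLp_one_iff_integrable.1 (memLp_id_gaussianReal 1)
  have hderiv := hasDerivAt_integral_comp_dd hid (lipschitzWith_Phi_pow n) (hasDerivAt_Phi_pow n)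
    c hρ.1 hρ.2
  simpa only [Hn, integral_mul_phi, smul_eq_mul, mul_comm (G ρ c _)] using hderiv
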